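/- Every class of languages behaviorally correctly learnable from informants is learnable by a globally consistent, weakly monotone, behaviorally correct full-information learner: [Inf G Bc] = [τ(Cons) Inf G WMon Bc]. -/

import Mathlib

open Filter Classical

namespace InfBc

/-! ### Basic notions: r.e. sets, informants, learners -/

/-- The `e`-th recursively enumerable set (via an acceptable numbering of
partial computable functions, `W e = dom φ_e`). -/
def W (e : ℕ) : Set ℕ := {x | ((Denumerable.ofNat Nat.Partrec.Code e).eval x).Dom}

/-- A language is recursively enumerable. -/
def RE (L : Set ℕ) : Prop := ∃ e, W e = L

abbrev Datum := ℕ × Bool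
abbrev Seq := List Datum
abbrev Informant := ℕ → Datum
abbrev HypSeq := ℕ → Part ℕ
/-- Learners are partial functions; all input types are coded into `ℕ`. -/
abbrev Learner := ℕ →. ℕ
abbrev Restriction := HypSeq → Informant → Prop

/-- Positive information of an infinite sequence. -/
def posI (I : Informant) : Set ℕ := {x | ∃ n, I n = (x, true)}
/-- Negative information of an infinite sequence. -/
def negI (I : Informant) : Set ℕ := {x | ∃ n, I n = (x, false)}

/-- `I` is an informant for the language `L`. -/
def IsInformant (I : Informant) (L : Set ℕ) : Prop := posI I = L ∧ negI I = Lᶜ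

/-- `I` is an informant (for some language), i.e. `I ∈ Inf`. -/
def IsInf (I : Informant) : Prop := IsInformant I (posI I)

/-- `I` is a canonical informant. -/
def Canonical (I : Informant) : Prop := ∀ x, I x = (x, true) ∨ I x = (x, false)

/-- `I[n]`, the length-`n` initial segment of `I`. -/
def segment (I : Informant) (n : ℕ) : Seq := (List.range n).map I

/-- Positive information of a finite sequence. -/
def posS (σ : Seq) : Set ℕ := {x | (x, true) ∈ σ}
/-- Negative information of a finite sequence. -/
def negS (σ : Seq) : Set ℕ := {x | (x, false) ∈ σ}
/-- The content of a finite sequence, as a set. -/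
def contentS (σ : Seq) : Set Datum := {a | a ∈ σ}

/-! ### Interaction operators -/

abbrev InteractionOperator := Learner → Informant → HypSeq

/-- Full-information (Gold-style) interaction: `G(h,I)(i) = h(I[i])`. -/
def Gop : InteractionOperator := fun h I i => h (Encodable.encode (segment I i))

/-- Set-driven interaction: `Sd(h,I)(i) = h(content(I[i]))`. -/
def Sdop : InteractionOperator := fun h I i => h (Encodable.encode (segment I i).toFinset)

/-- The iterated evaluation of an iterative learner on a finite sequence:
start with the initial hypothesis `h(none)` and feed the data one by one. -/
def iterExtend (h : Learner) (σ : Seq) : Part ℕ :=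
  σ.foldl (fun pe a => pe.bind fun e => h (Encodable.encode (some (e, a))))
    (h (Encodable.encode (none : Option (ℕ × Datum))))

/-- Iterative interaction: `It(h,I)(i)` is obtained by feeding `I[i]` one datum
at a time, each time updating the previous hypothesis. -/
def Itop : InteractionOperator := fun h I i => iterExtend h (segment I i)

/-- An iterative learner is confluent if the order and multiplicity in which
the content is presented does not matter. -/
def ConfluentLearner (h : Learner) : Prop :=
  ∀ σ τ : Seq, contentS σ = contentS τ → iterExtend h σ = iterExtend h τ

/-- Confluently iterative interaction. -/
noncomputable def CflItop : InteractionOperator := fun h I i =>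
  if ConfluentLearner h then iterExtend h (segment I i) else Part.none

/-- `β ≼ β'`: every (partial computable) `β`-learner can be translated into a
`β'`-learner with the same hypothesis sequence on every informant. -/
def OpLe (β β' : InteractionOperator) : Prop :=
  ∀ h : Learner, Partrec h → ∃ h' : Learner, Partrec h' ∧
    ∀ I : Informant, IsInf I → ∀ n, β h I n = β' h' I n

/-! ### Learning restrictions -/

/-- The trivial restriction `T`. -/
def TT : Restriction := fun _ _ => True

/-- Explanatory identification. -/
def Ex : Restriction := fun p I =>
  ∃ q, W q = posI I ∧ ∀ᶠ n in atTop, p n = Part.some q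

/-- Behaviorally correct identification. -/
def Bc : Restriction := fun p I => ∀ᶠ n in atTop, ∃ e ∈ p n, W e = posI I

/-- Consistency of a hypothesis with a finite sequence of data. -/
def ConsH (e : ℕ) (σ : Seq) : Prop := posS σ ⊆ W e ∧ negS σ ∩ W e = ∅

/-- Consistency of a hypothesis sequence with an informant. -/
def Cons : Restriction := fun p I => ∀ n, ∃ e ∈ p n, ConsH e (segment I n)

/-- Strongly monotone. -/
def SMon : Restriction := fun p _ =>
  ∀ s t, s ≤ t → ∀ e ∈ p s, ∀ e' ∈ p t, W e ⊆ W e'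

/-- Dual strongly monotone. -/
def SMond : Restriction := fun p _ =>
  ∀ s t, s ≤ t → ∀ e ∈ p s, ∀ e' ∈ p t, W e' ⊆ W e

/-- Monotone. -/
def Mon : Restriction := fun p I =>
  ∀ s t, s ≤ t → ∀ e ∈ p s, ∀ e' ∈ p t, W e ∩ posI I ⊆ W e' ∩ posI I

/-- Dual monotone. -/
def Mond : Restriction := fun p I =>
  ∀ s t, s ≤ t → ∀ e ∈ p s, ∀ e' ∈ p t, (W e)ᶜ ∩ negI I ⊆ (W e')ᶜ ∩ negI I

/-- Weakly monotone. -/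
def WMon : Restriction := fun p I =>
  ∀ s t, s ≤ t → ∀ e ∈ p s, ConsH e (segment I t) → ∀ e' ∈ p t, W e ⊆ W e'

/-- Dual weakly monotone. -/
def WMond : Restriction := fun p I =>
  ∀ s t, s ≤ t → ∀ e ∈ p s, ConsH e (segment I t) → ∀ e' ∈ p t, W e' ⊆ W e

/-- Cautious. -/
def Caut : Restriction := fun p _ =>
  ∀ s t, s < t → ∀ e ∈ p s, ∀ e' ∈ p t, ¬ W e' ⊂ W e

/-- Target cautious. -/
def CautTar : Restriction := fun p I =>
  ∀ s, ∀ e ∈ p s, ¬ posI I ⊂ W e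

/-- Finitely cautious. -/
def CautFin : Restriction := fun p _ =>
  ∀ s t, s < t → ∀ e ∈ p s, ∀ e' ∈ p t, W e' ⊂ W e → (W e').Infinite

/-- Infinitely cautious. -/
def CautInf : Restriction := fun p _ =>
  ∀ s t, s < t → ∀ e ∈ p s, ∀ e' ∈ p t, W e' ⊂ W e → (W e').Finite

/-! ### Learnability -/

/-- The class of admissible learners: all partial computable learners. -/
def AllL : Learner → Prop := fun _ => True
/-- The class of admissible learners: total computable learners (`ℛ`). -/
def TotalL : Learner → Prop := fun h => ∀ x, (h x).Dom
/-- Admissible informants: all informants (`Inf`). -/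
def AllI : Informant → Prop := fun _ => True

/-- `h` learns `L` in the setting given by admissible informants `P`,
interaction operator `β` and local restriction `δ`. -/
def LearnsWith (P : Informant → Prop) (β : InteractionOperator) (δ : Restriction)
    (h : Learner) (L : Set ℕ) : Prop :=
  RE L ∧ ∀ I : Informant, P I → IsInformant I L → δ (β h I) I

/-- `[τ(α) C P β δ]`: the collection of all classes of languages learnable by
some learner in `C` that satisfies the global restriction `α` on all admissible
informants, under interaction operator `β` and local restriction `δ`. -/
def Learnable (α : Restriction) (C : Learner → Prop) (P : Informant → Prop)
    (β : InteractionOperator) (δ : Restriction) : Set (Set (Set ℕ)) :=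
  {𝓛 | ∃ h : Learner, Partrec h ∧ C h ∧
        (∀ I : Informant, IsInf I → P I → α (β h I) I) ∧
        ∀ L ∈ 𝓛, LearnsWith P β δ h L}

/-! ### Properties of restrictions -/

/-- A learning restriction is delayable if it is preserved under postponing
hypotheses along a non-decreasing unbounded function. -/
def Delayable (δ : Restriction) : Prop :=
  ∀ I I' : Informant, IsInf I → IsInf I' → Set.range I = Set.range I' →
    ∀ (p : HypSeq) (s : ℕ → ℕ), Monotone s → (∀ m, ∃ n, m ≤ s n) →
      δ p I → (∀ n, contentS (segment I (s n)) ⊆ contentS (segment I' n)) →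
      δ (fun n => p (s n)) I'

/-- A learning restriction is semantic if it is indifferent to replacing the
hypothesis sequence by a semantically equivalent one. -/
def Semantic (δ : Restriction) : Prop :=
  ∀ (p p' : HypSeq) (I : Informant), δ p I →
    (∀ i, (p i).Dom ↔ (p' i).Dom) →
    (∀ i, ∀ e ∈ p i, ∀ e' ∈ p' i, W e = W e') →
    δ p' I


/-! ### Auxiliary material for the proof -/

/-- Generic `s-m-n` construction: uniformly r.e. families have computable index functions. -/
lemma exists_index {ω : Type} [Primcodable ω] (R : Seq × ℕ → ω → Prop) (hR : PrimrecRel R) :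
    ∃ f : ℕ → ℕ, Computable f ∧
      ∀ σ : Seq, W (f (Encodable.encode σ)) = {x | ∃ w, R (σ, x) w} := by
  obtain ⟨hd, hp⟩ := hR
  let g : Seq × ℕ → ℕ → Option ℕ := fun a t =>
    (Encodable.decode (α := ω) t).bind fun w => bif @decide _ (hd (a, w)) then some 0 else none
  have hg : Primrec₂ g := by
    refine Primrec.option_bind (Primrec.decode.comp Primrec.snd) ?_
    refine Primrec.cond (hp.comp (Primrec.pair (Primrec.fst.comp Primrec.fst) Primrec.snd))
      (Primrec.const _) (Primrec.const _)
  have hF : Partrec fun a : Seq × ℕ => Nat.rfindOpt (g a) := Partrec.rfindOpt hg.to_comp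
  obtain ⟨c, hc⟩ := Nat.Partrec.Code.exists_code.1 hF
  refine ⟨fun n => Encodable.encode (Nat.Partrec.Code.curry c n), ?_, ?_⟩
  · exact (Primrec.encode.comp
      (Nat.Partrec.Code.primrec₂_curry.comp (Primrec.const c) Primrec.id)).to_comp
  · intro σ
    ext x
    have hdec : Encodable.decode (α := Seq × ℕ) (Nat.pair (Encodable.encode σ) x)
        = some (σ, x) := Encodable.encodek (σ, x)
    have h1 : x ∈ W (Encodable.encode (Nat.Partrec.Code.curry c (Encodable.encode σ)))
        ↔ (Nat.rfindOpt (g (σ, x))).Dom := by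
      simp only [W, Set.mem_setOf_eq, Denumerable.ofNat_encode, Nat.Partrec.Code.eval_curry, hc,
        hdec, Part.coe_some, Part.bind_some]
      exact Iff.rfl
    rw [h1, Nat.rfindOpt_dom]
    simp only [Set.mem_setOf_eq]
    constructor
    · rintro ⟨t, a, ha⟩
      simp only [g, Option.mem_def, Option.bind_eq_some_iff] at ha
      obtain ⟨w, -, hw⟩ := ha
      refine ⟨w, ?_⟩
      by_contra hn
      simp [hn] at hw
    · rintro ⟨w, hw⟩
      refine ⟨Encodable.encode w, 0, ?_⟩
      simp [g, hw]

/-- Bounded simulation: within `s` steps the hypothesis `h(v)` is computed and its program halts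
on `x`. -/
def sim (c : Nat.Partrec.Code) (s : ℕ) (v : Seq) (x : ℕ) : Option ℕ :=
  (Nat.Partrec.Code.evaln s c (Encodable.encode v)).bind fun e =>
    Nat.Partrec.Code.evaln s (Denumerable.ofNat Nat.Partrec.Code e) x

lemma sim_primrec (c : Nat.Partrec.Code) :
    Primrec fun q : ℕ × Seq × ℕ => sim c q.1 q.2.1 q.2.2 := by
  unfold sim
  refine Primrec.option_bind ?_ ?_
  · exact Nat.Partrec.Code.primrec_evaln.comp
      (Primrec.pair (Primrec.pair Primrec.fst (Primrec.const c))
        (Primrec.encode.comp (Primrec.fst.comp Primrec.snd)))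
  · exact Nat.Partrec.Code.primrec_evaln.comp
      (Primrec.pair (Primrec.pair (Primrec.fst.comp Primrec.fst)
        ((Primrec.ofNat _).comp Primrec.snd))
        (Primrec.snd.comp (Primrec.snd.comp Primrec.fst)))

lemma sim_mono {c : Nat.Partrec.Code} {s t : ℕ} (hst : s ≤ t) {v : Seq} {x : ℕ}
    (h : sim c s v x ≠ none) : sim c t v x ≠ none := by
  obtain ⟨y, hy⟩ := Option.ne_none_iff_exists'.1 h
  obtain ⟨e, he, hy⟩ := Option.bind_eq_some_iff.1 hy
  refine Option.ne_none_iff_exists'.2 ⟨y, Option.bind_eq_some_iff.2 ⟨e, ?_, ?_⟩⟩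
  · exact Nat.Partrec.Code.evaln_mono hst he
  · exact Nat.Partrec.Code.evaln_mono hst hy

lemma exists_sim_iff {c : Nat.Partrec.Code} {v : Seq} {e : ℕ}
    (he : e ∈ c.eval (Encodable.encode v)) (x : ℕ) :
    (∃ s, sim c s v x ≠ none) ↔ x ∈ W e := by
  constructor
  · rintro ⟨s, h⟩
    obtain ⟨y, hy⟩ := Option.ne_none_iff_exists'.1 h
    obtain ⟨e', he', hy⟩ := Option.bind_eq_some_iff.1 hy
    obtain rfl := Part.mem_unique he (Nat.Partrec.Code.evaln_sound he')
    exact Part.dom_iff_mem.2 ⟨y, Nat.Partrec.Code.evaln_sound hy⟩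
  · intro hx
    obtain ⟨y, hy⟩ := Part.dom_iff_mem.1 hx
    obtain ⟨s, hs⟩ := Nat.Partrec.Code.evaln_complete.1 he
    obtain ⟨t, ht⟩ := Nat.Partrec.Code.evaln_complete.1 hy
    refine ⟨max s t, Option.ne_none_iff_exists'.2 ⟨y, Option.bind_eq_some_iff.2 ⟨e, ?_, ?_⟩⟩⟩
    · exact Nat.Partrec.Code.evaln_mono (le_max_left _ _) hs
    · exact Nat.Partrec.Code.evaln_mono (le_max_right _ _) ht

/-- The new hypothesis for `σ`: positive data, plus everything enumerated at a stage `s` by the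
hypothesis of some prefix `v`, provided that at stage `s` that hypothesis has not enumerated any
negative datum of `σ`. -/
def newRel (c : Nat.Partrec.Code) (a : Seq × ℕ) (w : ℕ × Seq × Seq) : Prop :=
  (a.2, true) ∈ a.1 ∨ (w.2.1 ++ w.2.2 = a.1 ∧ sim c w.1 w.2.1 a.2 ≠ none ∧
    ∀ d ∈ a.1, d.2 = true ∨ sim c w.1 w.2.1 d.1 = none)

lemma newRel_primrec (c : Nat.Partrec.Code) : PrimrecRel (newRel c) := by
  have hmem : PrimrecRel fun (σ : Seq) (b : Datum) => ∃ d ∈ σ, d = b :=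
    PrimrecRel.exists_mem_list Primrec.eq
  have hnone : PrimrecPred fun q : ℕ × Seq × ℕ => sim c q.1 q.2.1 q.2.2 = none :=
    PrimrecRel.comp Primrec.eq (sim_primrec c) (Primrec.const none)
  have hR : PrimrecRel fun (d : Datum) (q : ℕ × Seq) => d.2 = true ∨ sim c q.1 q.2 d.1 = none := by
    refine PrimrecPred.or ?_ ?_
    · exact PrimrecRel.comp Primrec.eq (Primrec.snd.comp Primrec.fst) (Primrec.const true)
    · exact hnone.comp (f := fun z : Datum × (ℕ × Seq) => (z.2.1, z.2.2, z.1.1))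
        (Primrec.pair (Primrec.fst.comp Primrec.snd) (Primrec.pair (Primrec.snd.comp Primrec.snd)
          (Primrec.fst.comp Primrec.fst)))
  have hall := PrimrecRel.forall_mem_list hR
  have hσ : Primrec fun z : (Seq × ℕ) × (ℕ × Seq × Seq) => z.1.1 := Primrec.fst.comp Primrec.fst
  have hx : Primrec fun z : (Seq × ℕ) × (ℕ × Seq × Seq) => z.1.2 := Primrec.snd.comp Primrec.fst
  have hs : Primrec fun z : (Seq × ℕ) × (ℕ × Seq × Seq) => z.2.1 := Primrec.fst.comp Primrec.snd
  have hv : Primrec fun z : (Seq × ℕ) × (ℕ × Seq × Seq) => z.2.2.1 :=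
    Primrec.fst.comp (Primrec.snd.comp Primrec.snd)
  have ht : Primrec fun z : (Seq × ℕ) × (ℕ × Seq × Seq) => z.2.2.2 :=
    Primrec.snd.comp (Primrec.snd.comp Primrec.snd)
  refine PrimrecPred.or ?_ (PrimrecPred.and ?_ (PrimrecPred.and ?_ ?_))
  · exact (hmem.comp hσ (Primrec.pair hx (Primrec.const true))).of_eq fun z => by simp
  · exact PrimrecRel.comp Primrec.eq (Primrec.list_append.comp hv ht) hσ
  · exact (hnone.comp (f := fun z : (Seq × ℕ) × (ℕ × Seq × Seq) => (z.2.1, z.2.2.1, z.1.2))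
      (Primrec.pair hs (Primrec.pair hv hx))).not
  · exact hall.comp hσ (Primrec.pair hs hv)

lemma mem_segment {I : Informant} {n : ℕ} {d : Datum} :
    d ∈ segment I n ↔ ∃ i < n, I i = d := by
  simp [segment]

lemma segment_add (I : Informant) (n k : ℕ) :
    segment I (n + k) = segment I n ++ (List.range k).map (fun i => I (n + i)) := by
  simp [segment, List.range_add, Function.comp_def]

lemma prefix_segment {I : Informant} {n : ℕ} {v τ : Seq} (h : v ++ τ = segment I n) :
    ∃ k ≤ n, v = segment I k := by
  have hlen : v.length + τ.length = n := by
    have := congrArg List.length h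
    simpa [segment] using this
  refine ⟨v.length, by omega, ?_⟩
  rw [← hlen, segment_add] at h
  exact (List.append_inj h (by simp [segment])).1

/-- The semantics of the new hypothesis on a segment. -/
lemma new_iff {c : Nat.Partrec.Code} {I : Informant} {n x : ℕ} :
    (∃ w, newRel c (segment I n, x) w) ↔
      (x, true) ∈ segment I n ∨ ∃ s, ∃ k ≤ n, sim c s (segment I k) x ≠ none ∧
        ∀ y, (y, false) ∈ segment I n → sim c s (segment I k) y = none := by
  constructor
  · rintro ⟨⟨s, v, τ⟩, h | ⟨h1, h2, h3⟩⟩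
    · exact Or.inl h
    · obtain ⟨k, hk, rfl⟩ := prefix_segment h1
      refine Or.inr ⟨s, k, hk, h2, fun y hy => ?_⟩
      simpa using h3 _ hy
  · rintro (h | ⟨s, k, hk, h2, h3⟩)
    · exact ⟨(0, [], []), Or.inl h⟩
    · obtain ⟨m, rfl⟩ := Nat.exists_eq_add_of_le hk
      refine ⟨(s, segment I k, (List.range m).map (fun i => I (k + i))), Or.inr ⟨?_, h2, ?_⟩⟩
      · exact (segment_add I k m).symm
      · rintro ⟨y, b⟩ hd
        cases b
        · exact Or.inr (h3 y hd)
        · exact Or.inl rfl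

/-- `[Inf G Bc] = [τ(Cons) Inf G WMon Bc]`. -/
theorem bc_eq_globally_consistent_wmon_bc :
    Learnable TT AllL AllI Gop Bc =
      Learnable Cons AllL AllI Gop (fun p I => WMon p I ∧ Bc p I) := by
  ext 𝓛
  constructor
  swap
  · rintro ⟨h, hp, -, -, hL⟩
    refine ⟨h, hp, trivial, fun _ _ _ => trivial, fun L hLL => ⟨(hL L hLL).1, ?_⟩⟩
    exact fun I hI hIL => ((hL L hLL).2 I hI hIL).2
  rintro ⟨h, hp, -, -, hL⟩
  obtain ⟨c, hc⟩ := Nat.Partrec.Code.exists_code.1 (Partrec.nat_iff.1 hp)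
  obtain ⟨f, hf, hW⟩ := exists_index _ (newRel_primrec c)
  have hmem : ∀ (I : Informant) n x, x ∈ W (f (Encodable.encode (segment I n))) ↔
      (x, true) ∈ segment I n ∨ ∃ s, ∃ k ≤ n, sim c s (segment I k) x ≠ none ∧
        ∀ y, (y, false) ∈ segment I n → sim c s (segment I k) y = none := by
    intro I n x
    rw [hW]
    exact new_iff
  have hdisj : ∀ (I : Informant), IsInf I → ∀ x, x ∈ posI I → x ∈ negI I → False := by
    intro I hI x h1 h2
    rw [hI.2] at h2
    exact h2 h1
  have hseg : ∀ (I : Informant) m n d, m ≤ n → d ∈ segment I m → d ∈ segment I n := by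
    intro I m n d hmn hd
    obtain ⟨i, hi, rfl⟩ := mem_segment.1 hd
    exact mem_segment.2 ⟨i, lt_of_lt_of_le hi hmn, rfl⟩
  refine ⟨fun n => Part.some (f n), hf, trivial, ?_, ?_⟩
  · -- global consistency
    intro I hI _ n
    refine ⟨_, Part.mem_some _, ?_, ?_⟩
    · intro x hx
      exact (hmem I n x).2 (Or.inl hx)
    · rw [Set.eq_empty_iff_forall_notMem]
      rintro x ⟨hx, hxW⟩
      rcases (hmem I n x).1 hxW with h1 | ⟨s, k, -, h2, h3⟩
      · obtain ⟨i, -, hi⟩ := mem_segment.1 h1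
        obtain ⟨j, -, hj⟩ := mem_segment.1 hx
        exact hdisj I hI x ⟨i, hi⟩ ⟨j, hj⟩
      · exact h2 (h3 x hx)
  · intro L hLL
    refine ⟨(hL L hLL).1, fun I hI hIL => ⟨?_, ?_⟩⟩
    · -- weak monotonicity
      intro s t hst e he hcons e' he' x hx
      obtain rfl := Part.mem_some_iff.1 he
      obtain rfl := Part.mem_some_iff.1 he'
      rw [hmem] at hx ⊢
      rcases hx with h1 | ⟨r, k, hk, h2, h3⟩
      · exact Or.inl (hseg I s t _ hst h1)
      · refine Or.inr ⟨r, k, hk.trans hst, h2, fun y hy => ?_⟩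
        by_contra hne
        have : y ∈ negS (segment I t) ∩ W (f (Encodable.encode (segment I s))) :=
          ⟨hy, (hmem I s y).2 (Or.inr ⟨r, k, hk, hne, h3⟩)⟩
        rw [hcons.2] at this
        exact this
    · -- behavioral correctness
      have hBc : Bc (Gop h I) I := (hL L hLL).2 I hI hIL
      obtain ⟨n0, hn0⟩ := eventually_atTop.1 hBc
      have hinf : ∀ x, x ∉ posI I → ∃ m, (x, false) ∈ segment I m := by
        intro x hx
        have : x ∈ negI I := by rw [hIL.2, ← hIL.1]; exact hx
        obtain ⟨i, hi⟩ := this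
        exact ⟨i + 1, mem_segment.2 ⟨i, by omega, hi⟩⟩
      -- every prefix is harmless from some point on
      have hgood : ∀ k, ∃ m, ∀ n, m ≤ n → ∀ s x, sim c s (segment I k) x ≠ none →
          (∀ y, (y, false) ∈ segment I n → sim c s (segment I k) y = none) → x ∈ posI I := by
        intro k
        by_cases hbad : ∃ s x, sim c s (segment I k) x ≠ none ∧ x ∉ posI I
        · let s := Nat.find hbad
          obtain ⟨g, hg, hgn⟩ := Nat.find_spec hbad
          obtain ⟨m, hm⟩ := hinf g hgn
          refine ⟨m, fun n hn s' x hx hcon => ?_⟩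
          by_contra hxn
          have hle : Nat.find hbad ≤ s' := Nat.find_min' hbad ⟨x, hx, hxn⟩
          exact sim_mono hle hg (hcon g (hseg I m n _ hn hm))
        · push Not at hbad
          exact ⟨0, fun n _ s x hx _ => hbad s x hx⟩
      choose M hM using hgood
      have hcor : ∀ k, n0 ≤ k → ∀ x, (∃ s, sim c s (segment I k) x ≠ none) ↔ x ∈ posI I := by
        intro k hk x
        obtain ⟨e, he, hWe⟩ := hn0 k hk
        rw [← hWe]
        refine exists_sim_iff ?_ x
        rw [hc]
        exact he
      refine eventually_atTop.2 ⟨max n0 ((Finset.range n0).sup M), fun n hn => ?_⟩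
      refine ⟨_, Part.mem_some _, ?_⟩
      ext x
      rw [hmem]
      constructor
      · rintro (h1 | ⟨s, k, hk, h2, h3⟩)
        · obtain ⟨i, -, hi⟩ := mem_segment.1 h1
          exact ⟨i, hi⟩
        · by_cases hkn : n0 ≤ k
          · exact (hcor k hkn x).1 ⟨s, h2⟩
          · refine hM k n ?_ s x h2 h3
            have : M k ≤ (Finset.range n0).sup M :=
              Finset.le_sup (Finset.mem_range.2 (by omega))
            exact this.trans ((le_max_right _ _).trans hn)
      · intro hx
        have hn' : n0 ≤ n := (le_max_left _ _).trans hn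
        obtain ⟨s, hs⟩ := (hcor n hn' x).2 hx
        refine Or.inr ⟨s, n, le_rfl, hs, fun y hy => ?_⟩
        by_contra hne
        have hy1 : y ∈ posI I := (hcor n hn' y).1 ⟨s, hne⟩
        obtain ⟨j, -, hj⟩ := mem_segment.1 hy
        have hy2 : y ∈ negI I := ⟨j, hj⟩
        rw [hIL.2, ← hIL.1] at hy2
        exact hy2 hy1

end InfBc
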